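/- For every integer m > 1, every radius a ≥ 1, every finite graph H, and every subset S of the vertices of H: in the random uniform attachment graph process with degree cap d = 2m, the probability that there exists a graph isomorphism from the subgraph of G_n induced on the set of all vertices at graph distance at most a from some open vertex of G_n onto H which maps the set of open vertices of G_n onto S, converges as n → ∞. -/

import Mathlib

open Finset MeasureTheory Filter Topology FirstOrder
open scoped ENNReal

noncomputable section

open scoped Classical

/-- The degree of vertex `v` in the graph `g`, counting neighbors among `{1, …, n}`. -/
def degIn (g : SimpleGraph ℕ) (n v : ℕ) : ℕ :=
  ((Finset.Icc 1 n).filter fun u => g.Adj v u).card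

/-- The set of neighbors of vertex `v` in the graph `g` among `{1, …, n}`. -/
def nbrsIn (g : SimpleGraph ℕ) (n v : ℕ) : Finset ℕ :=
  (Finset.Icc 1 n).filter fun u => g.Adj v u

/-- `g'` is obtained from `g` (a graph on `{1,…,n}`) by one admissible uniform-attachment
step with parameter `m` and degree cap `d = 2m`: the new vertex `n+1` is joined to `m`
distinct vertices of `{1,…,n}`, each of degree `< 2m` in `g`; adjacencies among the other
vertices are unchanged, and all edges of `g'` stay inside `{1,…,n+1}`. -/
def IsUAStep (m n : ℕ) (g g' : SimpleGraph ℕ) : Prop :=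
  (∀ u v, g'.Adj u v → u ∈ Finset.Icc 1 (n+1) ∧ v ∈ Finset.Icc 1 (n+1)) ∧
  (∀ u v, u ≠ n+1 → v ≠ n+1 → (g'.Adj u v ↔ g.Adj u v)) ∧
  (nbrsIn g' (n+1) (n+1)).card = m ∧
  (∀ u, g'.Adj (n+1) u → u ∈ Finset.Icc 1 n ∧ degIn g n u < 2*m)

/-- The complete graph on the vertex set `{1, …, k}` (as a graph on `ℕ`). -/
def completeOn (k : ℕ) : SimpleGraph ℕ :=
  SimpleGraph.fromRel (fun u v => u ∈ Finset.Icc 1 k ∧ v ∈ Finset.Icc 1 k)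

/-- `N(g)`: the number of `m`-element sets of vertices of degree `< 2m` of a graph `g`
on `{1,…,n}`. -/
def numOpenSets (m n : ℕ) (g : SimpleGraph ℕ) : ℕ :=
  (((Finset.Icc 1 n).filter fun v => degIn g n v < 2*m).card).choose m

/-- The random uniform attachment graph process with parameter `m` (degree cap `d = 2m`),
modeled by random variables `G n` (for `n ≥ m+1`) on a probability space `(Ω, P)` taking
values in simple graphs on `{1,…,n}`: `G (m+1)` is a.s. the complete graph on `{1,…,m+1}`;
a.s. each `G (n+1)` is obtained from `G n` by an admissible uniform attachment step; and
for every graph `g` on `{1,…,n}` and every `m`-element set `S` of vertices of degree `< 2m`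
of `g`, `P(G n = g and the neighborhood of n+1 in G (n+1) equals S) = P(G n = g) / N(g)`. -/
structure UAProcess (m : ℕ) {Ω : Type} [MeasurableSpace Ω] (P : Measure Ω) where
  G : ℕ → Ω → SimpleGraph ℕ
  meas : ∀ n H, MeasurableSet {ω | G n ω = H}
  init : P {ω | G (m+1) ω = completeOn (m+1)} = 1
  stepAdm : ∀ n, m+1 ≤ n → P {ω | IsUAStep m n (G n ω) (G (n+1) ω)} = 1
  stepUnif : ∀ n, m+1 ≤ n → ∀ g : SimpleGraph ℕ,
    (∀ u v, g.Adj u v → u ∈ Finset.Icc 1 n ∧ v ∈ Finset.Icc 1 n) →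
    ∀ S : Finset ℕ, S.card = m →
    (∀ v ∈ S, v ∈ Finset.Icc 1 n ∧ degIn g n v < 2*m) →
    P {ω | G n ω = g ∧ nbrsIn (G (n+1) ω) (n+1) (n+1) = S} =
      P {ω | G n ω = g} / (numOpenSets m n g : ℝ≥0∞)

/-- The ball of radius `a` around `v` in `g`: all vertices joined to `v` by a walk of
length at most `a` (i.e. at graph distance at most `a` from `v`). -/
def ballSet (g : SimpleGraph ℕ) (v a : ℕ) : Set ℕ := {u | ∃ p : g.Walk v u, p.length ≤ a}

/-- The set of open vertices of the graph `g` on `{1,…,n}`: vertices of degree `< 2m`. -/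
def openVerts (m n : ℕ) (g : SimpleGraph ℕ) : Set ℕ :=
  {v | v ∈ Finset.Icc 1 n ∧ degIn g n v < 2*m}

/-- The set of all vertices at graph distance at most `a` from some open vertex of the
graph `g` on `{1,…,n}`. -/
def openNbhd (m n a : ℕ) (g : SimpleGraph ℕ) : Set ℕ :=
  {u | ∃ v ∈ openVerts m n g, u ∈ ballSet g v a}

/-! ### Attaching a vertex -/

/-- All edges of `g` stay inside `{1, …, n}`. -/
def SupportedOn (g : SimpleGraph ℕ) (n : ℕ) : Prop :=
  ∀ u v, g.Adj u v → u ∈ Finset.Icc 1 n ∧ v ∈ Finset.Icc 1 n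

/-- The open vertices of a graph on `{1, …, n}`, as a finset. -/
def openFinset (m n : ℕ) (g : SimpleGraph ℕ) : Finset ℕ :=
  (Finset.Icc 1 n).filter fun v => degIn g n v < 2 * m

/-- The admissible neighborhoods of the new vertex `n + 1`. -/
def moves (m n : ℕ) (g : SimpleGraph ℕ) : Finset (Finset ℕ) :=
  (openFinset m n g).powersetCard m

/-- The graph obtained from `g` by joining the vertex `n + 1` to the vertices of `S`. -/
def attachVertex (n : ℕ) (g : SimpleGraph ℕ) (S : Finset ℕ) : SimpleGraph ℕ :=
  g ⊔ SimpleGraph.fromRel fun u v => u = n + 1 ∧ v ∈ S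

/-- `h` is reached from `g`, a graph on `{1, …, n}`, by `k` admissible attachment steps. -/
def Reach (m : ℕ) : ℕ → ℕ → SimpleGraph ℕ → SimpleGraph ℕ → Prop
  | 0, _, g, h => h = g
  | k + 1, n, g, h => ∃ S ∈ moves m n g, Reach m k (n + 1) (attachVertex n g S) h

/-- The properties shared by all graphs on `{1, …, n}` that the process can visit. -/
structure IsTame (m n : ℕ) (g : SimpleGraph ℕ) : Prop where
  supp : SupportedOn g n
  le_deg : ∀ v ∈ Finset.Icc 1 n, m ≤ degIn g n v
  deg_le : ∀ v ∈ Finset.Icc 1 n, degIn g n v ≤ 2 * m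
  sum_deg : ∑ v ∈ Finset.Icc 1 n, degIn g n v + m * (m + 1) = 2 * m * n

lemma mem_openVerts {m n v : ℕ} {g : SimpleGraph ℕ} :
    v ∈ openVerts m n g ↔ v ∈ Finset.Icc 1 n ∧ degIn g n v < 2 * m := Iff.rfl

lemma mem_openFinset {m n v : ℕ} {g : SimpleGraph ℕ} :
    v ∈ openFinset m n g ↔ v ∈ openVerts m n g := by
  simp [openFinset, openVerts]

lemma mem_moves {m n : ℕ} {g : SimpleGraph ℕ} {S : Finset ℕ} :
    S ∈ moves m n g ↔ S ⊆ openFinset m n g ∧ S.card = m :=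
  Finset.mem_powersetCard

lemma openFinset_subset (m n : ℕ) (g : SimpleGraph ℕ) : openFinset m n g ⊆ Finset.Icc 1 n :=
  Finset.filter_subset _ _

lemma subset_Icc_of_mem_moves {m n : ℕ} {g : SimpleGraph ℕ} {S : Finset ℕ}
    (hS : S ∈ moves m n g) : S ⊆ Finset.Icc 1 n :=
  (mem_moves.1 hS).1.trans (openFinset_subset m n g)

lemma attachVertex_adj_of_ne {n u v : ℕ} {g : SimpleGraph ℕ} {S : Finset ℕ}
    (hu : u ≠ n + 1) (hv : v ≠ n + 1) : (attachVertex n g S).Adj u v ↔ g.Adj u v := by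
  simp [attachVertex, SimpleGraph.sup_adj, SimpleGraph.fromRel_adj, hu, hv]

lemma attachVertex_adj_new {n v : ℕ} {g : SimpleGraph ℕ} {S : Finset ℕ}
    (hg : SupportedOn g n) (hS : S ⊆ Finset.Icc 1 n) :
    (attachVertex n g S).Adj (n + 1) v ↔ v ∈ S := by
  have h1 : ¬ g.Adj (n + 1) v := fun h => by
    have := (Finset.mem_Icc.1 (hg _ _ h).1).2
    omega
  have h2 : n + 1 ∉ S := fun h => by
    have := (Finset.mem_Icc.1 (hS h)).2
    omega
  simp only [attachVertex, SimpleGraph.sup_adj, SimpleGraph.fromRel_adj, h1, h2]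
  constructor
  · tauto
  · intro h
    refine Or.inr ⟨?_, Or.inl ⟨trivial, h⟩⟩
    rintro rfl
    exact h2 h

lemma supportedOn_attachVertex {n : ℕ} {g : SimpleGraph ℕ} {S : Finset ℕ}
    (hg : SupportedOn g n) (hS : S ⊆ Finset.Icc 1 n) :
    SupportedOn (attachVertex n g S) (n + 1) := by
  have hmono : Finset.Icc 1 n ⊆ Finset.Icc 1 (n + 1) := Finset.Icc_subset_Icc_right (by omega)
  have hnew : n + 1 ∈ Finset.Icc 1 (n + 1) := by simp
  intro u v h
  by_cases hu : u = n + 1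
  · subst hu
    exact ⟨hnew, hmono (hS ((attachVertex_adj_new hg hS).1 h))⟩
  by_cases hv : v = n + 1
  · subst hv
    exact ⟨hmono (hS ((attachVertex_adj_new hg hS).1 h.symm)), hnew⟩
  have := hg _ _ ((attachVertex_adj_of_ne hu hv).1 h)
  exact ⟨hmono this.1, hmono this.2⟩

lemma Icc_one_succ (n : ℕ) : Finset.Icc 1 (n + 1) = insert (n + 1) (Finset.Icc 1 n) := by
  ext u
  simp only [Finset.mem_Icc, Finset.mem_insert]
  omega

lemma succ_notMem_Icc (n : ℕ) : n + 1 ∉ Finset.Icc 1 n := by simp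

lemma nbrsIn_attachVertex_new {n : ℕ} {g : SimpleGraph ℕ} {S : Finset ℕ}
    (hg : SupportedOn g n) (hS : S ⊆ Finset.Icc 1 n) :
    nbrsIn (attachVertex n g S) (n + 1) (n + 1) = S := by
  ext u
  simp only [nbrsIn, Finset.mem_filter, attachVertex_adj_new hg hS, and_iff_right_iff_imp]
  intro h
  have := Finset.mem_Icc.1 (hS h)
  exact Finset.mem_Icc.2 (by omega)

lemma attachVertex_inj {n : ℕ} {g g' : SimpleGraph ℕ} {S S' : Finset ℕ}
    (hg : SupportedOn g n) (hg' : SupportedOn g' n) (hS : S ⊆ Finset.Icc 1 n)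
    (hS' : S' ⊆ Finset.Icc 1 n) (h : attachVertex n g S = attachVertex n g' S') :
    g = g' ∧ S = S' := by
  have hne : ∀ {f : SimpleGraph ℕ} {u v}, SupportedOn f n → f.Adj u v →
      u ≠ n + 1 ∧ v ≠ n + 1 :=
    fun hf huv => ⟨fun h => succ_notMem_Icc n (h ▸ (hf _ _ huv).1),
      fun h => succ_notMem_Icc n (h ▸ (hf _ _ huv).2)⟩
  constructor
  · ext u v
    constructor
    · intro huv
      obtain ⟨hu, hv⟩ := hne hg huv
      rwa [← attachVertex_adj_of_ne (S := S') hu hv, ← h, attachVertex_adj_of_ne hu hv]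
    · intro huv
      obtain ⟨hu, hv⟩ := hne hg' huv
      rwa [← attachVertex_adj_of_ne (S := S) hu hv, h, attachVertex_adj_of_ne hu hv]
  · rw [← nbrsIn_attachVertex_new hg hS, h, nbrsIn_attachVertex_new hg' hS']

lemma degIn_attachVertex_new {n : ℕ} {g : SimpleGraph ℕ} {S : Finset ℕ}
    (hg : SupportedOn g n) (hS : S ⊆ Finset.Icc 1 n) :
    degIn (attachVertex n g S) (n + 1) (n + 1) = S.card :=
  congrArg Finset.card (nbrsIn_attachVertex_new hg hS)

lemma degIn_attachVertex_of_mem {n v : ℕ} {g : SimpleGraph ℕ} {S : Finset ℕ}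
    (hg : SupportedOn g n) (hS : S ⊆ Finset.Icc 1 n) (hv : v ∈ Finset.Icc 1 n) :
    degIn (attachVertex n g S) (n + 1) v = degIn g n v + if v ∈ S then 1 else 0 := by
  have hvn : v ≠ n + 1 := fun h => succ_notMem_Icc n (h ▸ hv)
  have hfilter : (Finset.Icc 1 n).filter (fun u => (attachVertex n g S).Adj v u) =
      (Finset.Icc 1 n).filter fun u => g.Adj v u :=
    Finset.filter_congr fun u hu =>
      attachVertex_adj_of_ne hvn fun h => succ_notMem_Icc n (h ▸ hu)
  unfold degIn
  rw [Icc_one_succ, Finset.filter_insert, hfilter, SimpleGraph.adj_comm,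
    attachVertex_adj_new hg hS]
  split_ifs with h
  · exact Finset.card_insert_of_notMem fun h' => succ_notMem_Icc n (Finset.mem_filter.1 h').1
  · rfl

lemma IsTame.attachVertex {m n : ℕ} {g : SimpleGraph ℕ} {S : Finset ℕ}
    (hg : IsTame m n g) (hS : S ∈ moves m n g) : IsTame m (n + 1) (attachVertex n g S) := by
  have hSn := subset_Icc_of_mem_moves hS
  obtain ⟨hSo, hSc⟩ := mem_moves.1 hS
  refine ⟨supportedOn_attachVertex hg.supp hSn, ?_, ?_, ?_⟩
  · intro v hv
    rw [Icc_one_succ, Finset.mem_insert] at hv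
    rcases hv with rfl | hv
    · rw [degIn_attachVertex_new hg.supp hSn, hSc]
    · rw [degIn_attachVertex_of_mem hg.supp hSn hv]
      have := hg.le_deg v hv
      omega
  · intro v hv
    rw [Icc_one_succ, Finset.mem_insert] at hv
    rcases hv with rfl | hv
    · rw [degIn_attachVertex_new hg.supp hSn, hSc]
      omega
    · rw [degIn_attachVertex_of_mem hg.supp hSn hv]
      have := hg.deg_le v hv
      split_ifs with h
      · have := (Finset.mem_filter.1 (hSo h)).2
        omega
      · omega
  · rw [Icc_one_succ, Finset.sum_insert (succ_notMem_Icc n),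
      degIn_attachVertex_new hg.supp hSn, hSc,
      Finset.sum_congr rfl fun v hv => degIn_attachVertex_of_mem hg.supp hSn hv,
      Finset.sum_add_distrib, Finset.sum_ite_mem, Finset.inter_eq_right.2 hSn]
    have := hg.sum_deg
    simp only [Finset.sum_const, hSc, smul_eq_mul, mul_one]
    linarith

lemma Reach.isTame {m k n : ℕ} {g h : SimpleGraph ℕ} (hr : Reach m k n g h)
    (hg : IsTame m n g) : IsTame m (n + k) h := by
  induction k generalizing n g with
  | zero => cases hr; exact hg
  | succ k ih =>
    obtain ⟨S, hS, hr⟩ := hr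
    have := ih hr (hg.attachVertex hS)
    rwa [Nat.add_right_comm] at this

lemma Reach.trans {m k l n : ℕ} {g h h' : SimpleGraph ℕ} (hr : Reach m k n g h)
    (hr' : Reach m l (n + k) h h') : Reach m (k + l) n g h' := by
  induction k generalizing n g with
  | zero => cases hr; simpa using hr'
  | succ k ih =>
    obtain ⟨S, hS, hr⟩ := hr
    rw [Nat.add_right_comm]
    exact ⟨S, hS, ih hr (by rwa [Nat.add_right_comm, Nat.add_assoc])⟩

lemma isTame_completeOn (m : ℕ) : IsTame m (m + 1) (completeOn (m + 1)) := by
  have hadj : ∀ u v, (completeOn (m + 1)).Adj u v ↔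
      u ≠ v ∧ u ∈ Finset.Icc 1 (m + 1) ∧ v ∈ Finset.Icc 1 (m + 1) := by
    intro u v
    simp only [completeOn, SimpleGraph.fromRel_adj]
    tauto
  have hdeg : ∀ v ∈ Finset.Icc 1 (m + 1), degIn (completeOn (m + 1)) (m + 1) v = m := by
    intro v hv
    have : (Finset.Icc 1 (m + 1)).filter (fun u => (completeOn (m + 1)).Adj v u) =
        (Finset.Icc 1 (m + 1)).erase v := by
      ext u
      simp only [Finset.mem_filter, hadj, Finset.mem_erase]
      constructor
      · rintro ⟨h, h', -⟩
        exact ⟨h'.symm, h⟩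
      · rintro ⟨h', h⟩
        exact ⟨h, h'.symm, hv, h⟩
    rw [degIn, this, Finset.card_erase_of_mem hv]
    simp
  refine ⟨fun u v h => ((hadj u v).1 h).2, fun v hv => (hdeg v hv).ge,
    fun v hv => by rw [hdeg v hv]; omega, ?_⟩
  rw [Finset.sum_congr rfl hdeg]
  simp only [Finset.sum_const, Nat.card_Icc, smul_eq_mul, Nat.add_sub_cancel]
  ring

/-! ### Closing all open vertices -/

lemma exists_balanced_subset {m k : ℕ} {O : Finset ℕ} {d : ℕ → ℕ} (hd : ∀ v ∈ O, d v ≤ k + 1)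
    (hsum : ∑ v ∈ O, d v = m * (k + 1)) :
    ∃ S ⊆ O, S.card = m ∧ (∀ v ∈ S, 0 < d v) ∧ ∀ v ∈ O, v ∉ S → d v ≤ k := by
  have h1 : (O.filter fun v => d v = k + 1).card ≤ m := by
    refine Nat.le_of_mul_le_mul_right ?_ (Nat.succ_pos k)
    calc _ = ∑ v ∈ O.filter fun v => d v = k + 1, (k + 1) := by simp
      _ = ∑ v ∈ O.filter fun v => d v = k + 1, d v :=
        Finset.sum_congr rfl fun v hv => (Finset.mem_filter.1 hv).2.symm
      _ ≤ ∑ v ∈ O, d v := Finset.sum_le_sum_of_subset (Finset.filter_subset _ _)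
      _ = _ := hsum
  have h2 : m ≤ (O.filter fun v => 0 < d v).card := by
    refine Nat.le_of_mul_le_mul_right ?_ (Nat.succ_pos k)
    calc m * (k + 1) = ∑ v ∈ O, d v := hsum.symm
      _ = ∑ v ∈ O.filter fun v => 0 < d v, d v := by
        rw [Finset.sum_filter]
        refine Finset.sum_congr rfl fun v _ => ?_
        split_ifs <;> omega
      _ ≤ ∑ v ∈ O.filter fun v => 0 < d v, (k + 1) :=
        Finset.sum_le_sum fun v hv => hd v (Finset.mem_filter.1 hv).1
      _ = _ := by simp
  have h3 : (O.filter fun v => d v = k + 1) ⊆ O.filter fun v => 0 < d v :=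
    Finset.monotone_filter_right O fun v _ (h : d v = k + 1) => by omega
  obtain ⟨S, hS1, hS2, hS⟩ := Finset.exists_subsuperset_card_eq h3 h1 h2
  refine ⟨S, hS2.trans (Finset.filter_subset _ _), hS,
    fun v hv => (Finset.mem_filter.1 (hS2 hv)).2, fun v hv hvS => ?_⟩
  have h4 : d v ≠ k + 1 := fun h => hvS (hS1 (Finset.mem_filter.2 ⟨hv, h⟩))
  have := hd v hv
  omega

/-- `h` arises from the graph `g` on `{1, …, n}` by adding `k` vertices of degree `m`, joined only
to vertices of `O`, in such a way that all vertices of `O` become closed. -/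
structure IsFilling (m k n : ℕ) (g h : SimpleGraph ℕ) (O : Finset ℕ) : Prop where
  reach : Reach m k n g h
  deg_eq : ∀ v ∈ O, degIn h (n + k) v = 2 * m
  deg_old : ∀ v ∈ Finset.Icc 1 n, v ∉ O → degIn h (n + k) v = degIn g n v
  deg_new : ∀ v ∈ Finset.Ioc n (n + k), degIn h (n + k) v = m
  adj_old : ∀ u v, u ≤ n → v ≤ n → (h.Adj u v ↔ g.Adj u v)
  adj_new : ∀ u v, n < u → h.Adj u v → v ∈ O

lemma exists_isFilling {m k n : ℕ} {g : SimpleGraph ℕ} {O : Finset ℕ} (hg : SupportedOn g n)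
    (hO : O ⊆ Finset.Icc 1 n) (hdeg : ∀ v ∈ O, degIn g n v ≤ 2 * m)
    (hk : ∀ v ∈ O, 2 * m - degIn g n v ≤ k)
    (hsum : ∑ v ∈ O, (2 * m - degIn g n v) = m * k) : ∃ h, IsFilling m k n g h O := by
  induction k generalizing n g with
  | zero =>
    refine ⟨g, rfl, fun v hv => ?_, fun v _ _ => rfl, by simp, fun u v _ _ => Iff.rfl, ?_⟩
    · have := hdeg v hv
      have := hk v hv
      simp only [Nat.add_zero]
      omega
    · intro u v hu h
      have := Finset.mem_Icc.1 (hg u v h).1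
      omega
  | succ k ih =>
    obtain ⟨S, hSO, hSc, hSpos, hSk⟩ := exists_balanced_subset hk hsum
    have hSn := hSO.trans hO
    have hSm : S ∈ moves m n g := mem_moves.2 ⟨fun v hv => Finset.mem_filter.2
      ⟨hSn hv, by have := hSpos v hv; omega⟩, hSc⟩
    have hd : ∀ v ∈ O, degIn (attachVertex n g S) (n + 1) v =
        degIn g n v + if v ∈ S then 1 else 0 := fun v hv =>
      degIn_attachVertex_of_mem hg hSn (hO hv)
    have hmono : Finset.Icc 1 n ⊆ Finset.Icc 1 (n + 1) := Finset.Icc_subset_Icc_right (by omega)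
    obtain ⟨h, hh⟩ := ih (g := attachVertex n g S) (n := n + 1)
      (supportedOn_attachVertex hg hSn) (hO.trans hmono)
      (fun v hv => by
        rw [hd v hv]
        have := hdeg v hv
        split_ifs with hvS
        · have := hSpos v hvS
          omega
        · omega)
      (fun v hv => by
        rw [hd v hv]
        have := hk v hv
        split_ifs with hvS
        · omega
        · exact hSk v hv hvS)
      (by
        have h1 : ∑ v ∈ O, (2 * m - degIn g n v) =
            ∑ v ∈ O, (2 * m - degIn (attachVertex n g S) (n + 1) v) +
              ∑ v ∈ O, if v ∈ S then 1 else 0 := by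
          rw [← Finset.sum_add_distrib]
          refine Finset.sum_congr rfl fun v hv => ?_
          rw [hd v hv]
          split_ifs with hvS
          · have := hSpos v hvS
            omega
          · omega
        rw [hsum, Finset.sum_ite_mem, Finset.inter_eq_right.2 hSO] at h1
        simp only [Finset.sum_const, hSc, smul_eq_mul, mul_one] at h1
        linarith)
    have hnk : n + 1 + k = n + (k + 1) := by omega
    have hnO : n + 1 ∉ O := fun h => succ_notMem_Icc n (hO h)
    refine ⟨h, ⟨S, hSm, hh.reach⟩, fun v hv => hnk ▸ hh.deg_eq v hv, fun v hv hvO => ?_,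
      fun v hv => ?_, fun u v hu hv => ?_, fun u v hu huv => ?_⟩
    · rw [← hnk, hh.deg_old v (hmono hv) hvO, degIn_attachVertex_of_mem hg hSn hv,
        if_neg fun h => hvO (hSO h), Nat.add_zero]
    · rw [← hnk]
      rcases eq_or_ne v (n + 1) with rfl | hvn
      · rw [hh.deg_old _ (by simp) hnO, degIn_attachVertex_new hg hSn, hSc]
      · refine hh.deg_new v ?_
        rw [Finset.mem_Ioc] at hv ⊢
        omega
    · rw [hh.adj_old u v (by omega) (by omega), attachVertex_adj_of_ne (by omega) (by omega)]
    · rcases eq_or_ne u (n + 1) with rfl | hun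
      · by_cases hv : v ≤ n + 1
        · rw [hh.adj_old _ v le_rfl hv, attachVertex_adj_new hg hSn] at huv
          exact hSO huv
        · exact absurd (hh.adj_new v _ (by omega) huv.symm) hnO
      · exact hh.adj_new u v (by omega) huv

lemma IsTame.sum_deficiency {m n : ℕ} {g : SimpleGraph ℕ} (hg : IsTame m n g) :
    ∑ v ∈ openFinset m n g, (2 * m - degIn g n v) = m * (m + 1) := by
  have h1 : ∑ v ∈ openFinset m n g, (2 * m - degIn g n v) =
      ∑ v ∈ Finset.Icc 1 n, (2 * m - degIn g n v) := by
    rw [openFinset, Finset.sum_filter]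
    refine Finset.sum_congr rfl fun v _ => ?_
    split_ifs <;> omega
  have h2 : ∑ v ∈ Finset.Icc 1 n, (2 * m - degIn g n v) + ∑ v ∈ Finset.Icc 1 n, degIn g n v =
      2 * m * n := by
    rw [← Finset.sum_add_distrib, Finset.sum_congr rfl fun v hv =>
      Nat.sub_add_cancel (hg.deg_le v hv)]
    simp [mul_comm]
  have := hg.sum_deg
  omega

lemma IsTame.exists_isFilling {m n : ℕ} {g : SimpleGraph ℕ} (hg : IsTame m n g) :
    ∃ h, IsFilling m (m + 1) n g h (openFinset m n g) :=
  _root_.exists_isFilling hg.supp (openFinset_subset m n g)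
    (fun v hv => hg.deg_le v (openFinset_subset m n g hv))
    (fun v hv => by
      have := hg.le_deg v (openFinset_subset m n g hv)
      omega) hg.sum_deficiency

lemma IsTame.moves_nonempty {m n : ℕ} {g : SimpleGraph ℕ} (hg : IsTame m n g) :
    (moves m n g).Nonempty := by
  obtain ⟨h, hh⟩ := hg.exists_isFilling
  obtain ⟨S, hS, -⟩ := hh.reach
  exact ⟨S, hS⟩

lemma IsTame.card_moves_le {m n : ℕ} {g : SimpleGraph ℕ} (hg : IsTame m n g) :
    (moves m n g).card ≤ (m * (m + 1)).choose m := by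
  rw [moves, Finset.card_powersetCard]
  refine Nat.choose_le_choose m ?_
  rw [← hg.sum_deficiency, Finset.card_eq_sum_ones]
  refine Finset.sum_le_sum fun v hv => ?_
  have := (mem_openVerts.1 (mem_openFinset.1 hv)).2
  omega

lemma IsFilling.mem_Ioc_of_mem_openVerts {m k n v : ℕ} {g h : SimpleGraph ℕ}
    (hh : IsFilling m k n g h (openFinset m n g)) (hv : v ∈ openVerts m (n + k) h) :
    v ∈ Finset.Ioc n (n + k) := by
  obtain ⟨hv1, hv2⟩ := mem_openVerts.1 hv
  rw [Finset.mem_Icc] at hv1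
  by_contra hvn
  rw [Finset.mem_Ioc] at hvn
  have hvn' : v ∈ Finset.Icc 1 n := Finset.mem_Icc.2 (by omega)
  by_cases hvO : v ∈ openFinset m n g
  · rw [hh.deg_eq v hvO] at hv2
    omega
  · rw [hh.deg_old v hvn' hvO] at hv2
    exact hvO (mem_openFinset.2 (mem_openVerts.2 ⟨hvn', hv2⟩))

/-! ### Neighborhoods of the open vertices -/

lemma openVerts_subset_openNbhd (m n b : ℕ) (g : SimpleGraph ℕ) :
    openVerts m n g ⊆ openNbhd m n b g :=
  fun v hv => ⟨v, hv, SimpleGraph.Walk.nil, Nat.zero_le _⟩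

lemma openNbhd_zero (m n : ℕ) (g : SimpleGraph ℕ) : openNbhd m n 0 g = openVerts m n g := by
  refine Set.Subset.antisymm ?_ (openVerts_subset_openNbhd m n 0 g)
  rintro u ⟨v, hv, p, hp⟩
  have := SimpleGraph.Walk.eq_of_length_eq_zero (Nat.le_zero.1 hp)
  exact this ▸ hv

lemma openNbhd_mono {m n b c : ℕ} (g : SimpleGraph ℕ) (h : b ≤ c) :
    openNbhd m n b g ⊆ openNbhd m n c g := by
  rintro u ⟨v, hv, p, hp⟩
  exact ⟨v, hv, p, hp.trans h⟩

lemma mem_openNbhd_succ_of_adj {m n b u w : ℕ} {g : SimpleGraph ℕ}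
    (hw : w ∈ openNbhd m n b g) (h : g.Adj w u) : u ∈ openNbhd m n (b + 1) g := by
  obtain ⟨v, hv, p, hp⟩ := hw
  exact ⟨v, hv, p.concat h, by simpa using hp⟩

lemma mem_openNbhd_succ {m n b u : ℕ} {g : SimpleGraph ℕ} :
    u ∈ openNbhd m n (b + 1) g ↔
      u ∈ openNbhd m n b g ∨ ∃ w ∈ openNbhd m n b g, g.Adj w u := by
  constructor
  · rintro ⟨v, hv, p, hp⟩
    rcases Nat.eq_zero_or_pos p.length with h0 | hpos
    · exact Or.inl ⟨v, hv, p, by omega⟩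
    · have hnil : ¬ p.Nil := fun h => by
        have := SimpleGraph.Walk.length_eq_zero_iff.2 h
        omega
      refine Or.inr ⟨p.penultimate, ⟨v, hv, p.dropLast, ?_⟩, p.adj_penultimate hnil⟩
      have : p.dropLast.length = p.length - 1 := by
        have := congrArg SimpleGraph.Walk.length (p.concat_dropLast (p.adj_penultimate hnil))
        rw [SimpleGraph.Walk.length_concat] at this
        omega
      omega
  · rintro (h | ⟨w, hw, h⟩)
    · exact openNbhd_mono g (Nat.le_succ b) h
    · exact mem_openNbhd_succ_of_adj hw h

lemma openNbhd_attachVertex_subset {m n b : ℕ} {g : SimpleGraph ℕ} {S : Finset ℕ}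
    (hg : SupportedOn g n) (hS : S ∈ moves m n g) :
    openNbhd m (n + 1) b (attachVertex n g S) ⊆ insert (n + 1) (openNbhd m n b g) := by
  have hSn := subset_Icc_of_mem_moves hS
  induction b with
  | zero =>
    rw [openNbhd_zero, openNbhd_zero]
    intro v hv
    obtain ⟨hv1, hv2⟩ := mem_openVerts.1 hv
    rw [Icc_one_succ, Finset.mem_insert] at hv1
    rcases hv1 with rfl | hv1
    · exact Set.mem_insert _ _
    · rw [degIn_attachVertex_of_mem hg hSn hv1] at hv2
      exact Set.mem_insert_of_mem _ (mem_openVerts.2 ⟨hv1, by omega⟩)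
  | succ b ih =>
    intro u hu
    rcases mem_openNbhd_succ.1 hu with hu | ⟨w, hw, hwu⟩
    · exact Set.insert_subset_insert (openNbhd_mono g (Nat.le_succ b)) (ih hu)
    by_cases hun : u = n + 1
    · exact hun ▸ Set.mem_insert _ _
    refine Set.mem_insert_of_mem _ ?_
    by_cases hwn : w = n + 1
    · subst hwn
      exact openVerts_subset_openNbhd m n _ g
        (mem_openFinset.1 ((mem_moves.1 hS).1 ((attachVertex_adj_new hg hSn).1 hwu)))
    · exact mem_openNbhd_succ_of_adj ((ih hw).resolve_left hwn)
        ((attachVertex_adj_of_ne hwn hun).1 hwu)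

lemma IsFilling.openNbhd_succ_subset {m k n b : ℕ} {g h : SimpleGraph ℕ}
    (hs : SupportedOn h (n + k)) (hh : IsFilling m k n g h (openFinset m n g)) :
    openNbhd m (n + k) (b + 1) h ⊆ ↑(Finset.Ioc n (n + k)) ∪ openNbhd m n b g := by
  have hstep : ∀ c w u, w ∈ ↑(Finset.Ioc n (n + k)) ∪ openNbhd m n c g → h.Adj w u →
      u ∈ ↑(Finset.Ioc n (n + k)) ∪ openVerts m n g ∪ {u | w ∈ openNbhd m n c g ∧ g.Adj w u} := by
    intro c w u hw hwu
    by_cases hun : n < u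
    · exact Or.inl (Or.inl (Finset.mem_coe.2 (Finset.mem_Ioc.2
        ⟨hun, (Finset.mem_Icc.1 (hs _ _ hwu).2).2⟩)))
    by_cases hwn : n < w
    · exact Or.inl (Or.inr (mem_openFinset.1 (hh.adj_new w u hwn hwu)))
    · refine Or.inr ⟨hw.resolve_left fun hw => ?_,
        (hh.adj_old w u (not_lt.1 hwn) (not_lt.1 hun)).1 hwu⟩
      exact hwn (Finset.mem_Ioc.1 (Finset.mem_coe.1 hw)).1
  induction b with
  | zero =>
    intro u hu
    rw [openNbhd_zero]
    rcases mem_openNbhd_succ.1 hu with hu | ⟨w, hw, hwu⟩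
    · rw [openNbhd_zero] at hu
      exact Or.inl (hh.mem_Ioc_of_mem_openVerts hu)
    · rw [openNbhd_zero] at hw
      have hw' := Finset.mem_Ioc.1 (hh.mem_Ioc_of_mem_openVerts hw)
      by_cases hun : n < u
      · exact Or.inl (Finset.mem_coe.2 (Finset.mem_Ioc.2
          ⟨hun, (Finset.mem_Icc.1 (hs _ _ hwu).2).2⟩))
      · exact Or.inr (mem_openFinset.1 (hh.adj_new w u hw'.1 hwu))
  | succ b ih =>
    intro u hu
    rcases mem_openNbhd_succ.1 hu with hu | ⟨w, hw, hwu⟩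
    · exact Set.union_subset_union_right _ (openNbhd_mono g (Nat.le_succ b)) (ih hu)
    · rcases hstep b w u (ih hw) hwu with (h1 | h1) | ⟨h1, h2⟩
      · exact Or.inl h1
      · exact Or.inr (openVerts_subset_openNbhd m n _ g h1)
      · exact Or.inr (mem_openNbhd_succ_of_adj h1 h2)

/-! ### Local isomorphisms -/

/-- The permutation `φ` identifies a set `A` of vertices containing the `b`-neighborhood of the open
vertices of `g` with a set of vertices of `g'` that contains all open vertices, respecting
adjacency and degrees. -/
structure LocalIso (m b n : ℕ) (g : SimpleGraph ℕ) (n' : ℕ) (g' : SimpleGraph ℕ)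
    (φ : Equiv.Perm ℕ) (A : Set ℕ) : Prop where
  mem_source : ∀ u ∈ A, u ∈ Finset.Icc 1 n
  mem_target : ∀ u ∈ A, φ u ∈ Finset.Icc 1 n'
  adj_iff : ∀ u ∈ A, ∀ v ∈ A, (g'.Adj (φ u) (φ v) ↔ g.Adj u v)
  deg_eq : ∀ u ∈ A, degIn g' n' (φ u) = degIn g n u
  symm_mem : ∀ u ∈ openVerts m n' g', φ.symm u ∈ A
  nbhd_subset : openNbhd m n b g ⊆ A

namespace LocalIso

variable {m b n n' : ℕ} {g g' : SimpleGraph ℕ} {φ : Equiv.Perm ℕ} {A : Set ℕ}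

lemma open_iff_of_mem (h : LocalIso m b n g n' g' φ A) {u : ℕ} (hu : u ∈ A) :
    φ u ∈ openVerts m n' g' ↔ u ∈ openVerts m n g := by
  simp only [mem_openVerts, h.mem_source u hu, h.mem_target u hu, h.deg_eq u hu]

lemma open_iff (h : LocalIso m b n g n' g' φ A) (u : ℕ) :
    φ u ∈ openVerts m n' g' ↔ u ∈ openVerts m n g := by
  constructor
  · intro hu
    have := h.symm_mem _ hu
    rw [Equiv.symm_apply_apply] at this
    exact (h.open_iff_of_mem this).1 hu
  · intro hu
    exact (h.open_iff_of_mem (h.nbhd_subset (openVerts_subset_openNbhd m n b g hu))).2 hu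

lemma adj_of_nbrs_mem (h : LocalIso m b n g n' g' φ A)
    (hg' : SupportedOn g' n') {w u : ℕ} (hw : w ∈ A) (hnbrs : ∀ v, g.Adj w v → v ∈ A) :
    g'.Adj (φ w) (φ u) ↔ g.Adj w u := by
  have hsub : (nbrsIn g n w).map φ.toEmbedding ⊆ nbrsIn g' n' (φ w) := by
    intro x hx
    obtain ⟨v, hv, rfl⟩ := Finset.mem_map.1 hx
    have hadj := (Finset.mem_filter.1 hv).2
    have hvA := hnbrs v hadj
    exact Finset.mem_filter.2 ⟨h.mem_target v hvA, (h.adj_iff w hw v hvA).2 hadj⟩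
  have heq := Finset.eq_of_subset_of_card_le hsub (by
    rw [Finset.card_map]
    exact (h.deg_eq w hw).le)
  constructor
  · intro hadj
    have hu : φ u ∈ nbrsIn g' n' (φ w) := Finset.mem_filter.2 ⟨(hg' _ _ hadj).2, hadj⟩
    rw [← heq] at hu
    obtain ⟨v, hv, hvu⟩ := Finset.mem_map.1 hu
    rw [← φ.injective hvu]
    exact (Finset.mem_filter.1 hv).2
  · intro hadj
    exact (h.adj_iff w hw u (hnbrs u hadj)).2 hadj

lemma mem_openNbhd_iff (h : LocalIso m b n g n' g' φ A)
    (hg' : SupportedOn g' n') {c : ℕ} (hc : c ≤ b) (u : ℕ) :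
    φ u ∈ openNbhd m n' c g' ↔ u ∈ openNbhd m n c g := by
  induction c generalizing u with
  | zero => rw [openNbhd_zero, openNbhd_zero, h.open_iff]
  | succ c ih =>
    have ih := ih (by omega)
    have hadj : ∀ w ∈ openNbhd m n c g, (g'.Adj (φ w) (φ u) ↔ g.Adj w u) := fun w hw =>
      h.adj_of_nbrs_mem hg' (h.nbhd_subset (openNbhd_mono g (by omega) hw)) fun v hv =>
        h.nbhd_subset (openNbhd_mono g hc (mem_openNbhd_succ_of_adj hw hv))
    rw [mem_openNbhd_succ, mem_openNbhd_succ, ih]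
    refine or_congr_right ⟨?_, ?_⟩
    · rintro ⟨w', hw', hadj'⟩
      obtain ⟨w, rfl⟩ := φ.surjective w'
      exact ⟨w, (ih w).1 hw', (hadj w ((ih w).1 hw')).1 hadj'⟩
    · rintro ⟨w, hw, hwu⟩
      exact ⟨φ w, (ih w).2 hw, (hadj w hw).2 hwu⟩

/-- The isomorphism between the neighborhoods of the open vertices. -/
def nbhdIso (h : LocalIso m b n g n' g' φ A) (hg' : SupportedOn g' n') :
    g.induce (openNbhd m n b g) ≃g g'.induce (openNbhd m n' b g') where
  toEquiv := φ.subtypeEquiv fun u => (h.mem_openNbhd_iff hg' le_rfl u).symm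
  map_rel_iff' {u v} := h.adj_iff u (h.nbhd_subset u.2) v (h.nbhd_subset v.2)

lemma map_mem_moves (h : LocalIso m b n g n' g' φ A) (S : Finset ℕ) :
    S.map φ.toEmbedding ∈ moves m n' g' ↔ S ∈ moves m n g := by
  simp only [mem_moves, Finset.card_map, Finset.subset_iff, Finset.mem_map, mem_openFinset]
  refine and_congr_left' ⟨fun hS u hu => (h.open_iff u).1 (hS ⟨u, hu, rfl⟩), ?_⟩
  rintro hS _ ⟨u, hu, rfl⟩
  exact (h.open_iff u).2 (hS hu)

/-- Parallel attachment steps preserve local isomorphisms. -/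
lemma exists_attachVertex (h : LocalIso m b n g n' g' φ A) (hg : SupportedOn g n)
    (hg' : SupportedOn g' n') {S : Finset ℕ} (hS : S ∈ moves m n g) :
    ∃ ψ : Equiv.Perm ℕ, LocalIso m b (n + 1) (attachVertex n g S) (n' + 1)
      (attachVertex n' g' (S.map φ.toEmbedding)) ψ (insert (n + 1) A) := by
  have hS' := (h.map_mem_moves S).2 hS
  have hSn := subset_Icc_of_mem_moves hS
  have hSn' := subset_Icc_of_mem_moves hS'
  have hne : ∀ u ∈ A, u ≠ n + 1 := fun u hu hun => succ_notMem_Icc n (hun ▸ h.mem_source u hu)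
  have hne' : ∀ u ∈ A, φ u ≠ n' + 1 := fun u hu hun =>
    succ_notMem_Icc n' (hun ▸ h.mem_target u hu)
  let ψ := φ.trans (Equiv.swap (φ (n + 1)) (n' + 1))
  have hψnew : ψ (n + 1) = n' + 1 := Equiv.swap_apply_left _ _
  have hψ : ∀ u ∈ A, ψ u = φ u := fun u hu =>
    Equiv.swap_apply_of_ne_of_ne (fun h => hne u hu (φ.injective h)) (hne' u hu)
  have hφS : ∀ u, φ u ∈ S.map φ.toEmbedding ↔ u ∈ S := fun u =>
    Finset.mem_map' φ.toEmbedding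
  refine ⟨ψ, ?_, ?_, ?_, ?_, ?_, ?_⟩
  · rintro u (rfl | hu)
    · simp
    · exact Icc_one_succ n ▸ Finset.mem_insert_of_mem (h.mem_source u hu)
  · rintro u (rfl | hu)
    · simp [hψnew]
    · exact Icc_one_succ n' ▸ hψ u hu ▸ Finset.mem_insert_of_mem (h.mem_target u hu)
  · rintro u (rfl | hu) v (rfl | hv)
    · simp
    · rw [hψnew, hψ v hv, attachVertex_adj_new hg' hSn', attachVertex_adj_new hg hSn, hφS]
    · rw [hψnew, hψ u hu, SimpleGraph.adj_comm, attachVertex_adj_new hg' hSn', hφS,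
        SimpleGraph.adj_comm, attachVertex_adj_new hg hSn]
    · rw [hψ u hu, hψ v hv, attachVertex_adj_of_ne (hne' u hu) (hne' v hv),
        attachVertex_adj_of_ne (hne u hu) (hne v hv), h.adj_iff u hu v hv]
  · rintro u (rfl | hu)
    · rw [hψnew, degIn_attachVertex_new hg hSn, degIn_attachVertex_new hg' hSn', Finset.card_map]
    · rw [hψ u hu, degIn_attachVertex_of_mem hg hSn (h.mem_source u hu),
        degIn_attachVertex_of_mem hg' hSn' (h.mem_target u hu), h.deg_eq u hu]
      simp only [hφS]
  · intro u' hu'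
    rw [← openNbhd_zero] at hu'
    rcases openNbhd_attachVertex_subset hg' hS' hu' with rfl | hu'
    · rw [← hψnew, Equiv.symm_apply_apply]
      exact Set.mem_insert _ _
    · rw [openNbhd_zero] at hu'
      have huA := h.symm_mem u' hu'
      have : ψ (φ.symm u') = u' := by rw [hψ _ huA, Equiv.apply_symm_apply]
      rw [← this, Equiv.symm_apply_apply]
      exact Set.mem_insert_of_mem _ huA
  · exact (openNbhd_attachVertex_subset hg hS).trans (Set.insert_subset_insert h.nbhd_subset)

lemma exists_reach {k : ℕ} {h : SimpleGraph ℕ} (hi : LocalIso m b n g n' g' φ A)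
    (hg : IsTame m n g) (hg' : IsTame m n' g') (hr : Reach m k n g h) :
    ∃ h' ψ, Reach m k n' g' h' ∧
      LocalIso m b (n + k) h (n' + k) h' ψ (↑(Finset.Ioc n (n + k)) ∪ A) := by
  induction k generalizing n g n' g' φ A with
  | zero =>
    cases hr
    exact ⟨g', φ, rfl, by simpa using hi⟩
  | succ k ih =>
    obtain ⟨S, hS, hr⟩ := hr
    obtain ⟨ψ, hψ⟩ := hi.exists_attachVertex hg.supp hg'.supp hS
    have hS' := (hi.map_mem_moves S).2 hS
    obtain ⟨h', ψ', hr', hψ'⟩ := ih hψ (hg.attachVertex hS) (hg'.attachVertex hS') hr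
    refine ⟨h', ψ', ⟨_, hS', hr'⟩, ?_⟩
    have hA : (↑(Finset.Ioc (n + 1) (n + 1 + k)) ∪ insert (n + 1) A : Set ℕ) =
        ↑(Finset.Ioc n (n + (k + 1))) ∪ A := by
      ext u
      simp only [Set.mem_union, Finset.mem_coe, Finset.mem_Ioc, Set.mem_insert_iff]
      by_cases hu : u ∈ A
      · simp [hu]
      · simp only [hu, or_false]
        omega
    rw [hA] at hψ'
    rwa [Nat.add_right_comm n, Nat.add_right_comm n'] at hψ'

lemma upgrade (hi : LocalIso m b n g n' g' φ A) (hsub : openNbhd m n (b + 1) g ⊆ A) :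
    LocalIso m (b + 1) n g n' g' φ A :=
  ⟨hi.mem_source, hi.mem_target, hi.adj_iff, hi.deg_eq, hi.symm_mem, hsub⟩

end LocalIso

lemma exists_perm_shift (n n' k : ℕ) :
    ∃ φ : Equiv.Perm ℕ, ∀ i < k, φ (n + 1 + i) = n' + 1 + i := by
  induction k with
  | zero => exact ⟨1, by simp⟩
  | succ k ih =>
    obtain ⟨φ, hφ⟩ := ih
    refine ⟨φ.trans (Equiv.swap (φ (n + 1 + k)) (n' + 1 + k)), fun i hi => ?_⟩
    rcases Nat.lt_succ_iff_lt_or_eq.1 hi with hi | rfl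
    · rw [Equiv.trans_apply, Equiv.swap_apply_of_ne_of_ne, hφ i hi]
      · intro h
        have := φ.injective h
        omega
      · rw [hφ i hi]
        omega
    · rw [Equiv.trans_apply, Equiv.swap_apply_left]

/-- Filling up all open vertices in two graphs leads to locally isomorphic graphs. -/
lemma IsFilling.exists_localIso {m n n' : ℕ} {g g' h h' : SimpleGraph ℕ}
    (hh : IsFilling m (m + 1) n g h (openFinset m n g))
    (hh' : IsFilling m (m + 1) n' g' h' (openFinset m n' g')) :
    ∃ φ A, LocalIso m 0 (n + (m + 1)) h (n' + (m + 1)) h' φ A := by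
  obtain ⟨φ, hφ⟩ := exists_perm_shift n n' (m + 1)
  have hφ' : ∀ u ∈ Finset.Ioc n (n + (m + 1)), φ u = n' + (u - n) := by
    intro u hu
    rw [Finset.mem_Ioc] at hu
    have := hφ (u - n - 1) (by omega)
    rw [show n + 1 + (u - n - 1) = u by omega] at this
    omega
  have htarget : ∀ u ∈ Finset.Ioc n (n + (m + 1)), φ u ∈ Finset.Ioc n' (n' + (m + 1)) := by
    intro u hu
    rw [hφ' u hu, Finset.mem_Ioc]
    rw [Finset.mem_Ioc] at hu
    omega
  have hindep : ∀ n (g h : SimpleGraph ℕ), IsFilling m (m + 1) n g h (openFinset m n g) →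
      ∀ u ∈ Finset.Ioc n (n + (m + 1)), ∀ v ∈ Finset.Ioc n (n + (m + 1)), ¬ h.Adj u v := by
    intro n g h hh u hu v hv huv
    have := Finset.mem_Icc.1 (openFinset_subset m n g (hh.adj_new u v (Finset.mem_Ioc.1 hu).1 huv))
    have := (Finset.mem_Ioc.1 hv).1
    omega
  refine ⟨φ, ↑(Finset.Ioc n (n + (m + 1))), fun u hu => ?_, fun u hu => ?_,
    fun u hu v hv => ?_, fun u hu => ?_, fun u hu => ?_, ?_⟩
  · rw [Finset.mem_coe, Finset.mem_Ioc] at hu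
    exact Finset.mem_Icc.2 (by omega)
  · have := Finset.mem_Ioc.1 (htarget u hu)
    exact Finset.mem_Icc.2 (by omega)
  · exact iff_of_false (hindep _ _ _ hh' _ (htarget u hu) _ (htarget v hv))
      (hindep _ _ _ hh u hu v hv)
  · rw [hh.deg_new u hu, hh'.deg_new _ (htarget u hu)]
  · have hu' := Finset.mem_Ioc.1 (hh'.mem_Ioc_of_mem_openVerts hu)
    have := hφ (u - n' - 1) (by omega)
    rw [show n' + 1 + (u - n' - 1) = u by omega] at this
    rw [← this, Equiv.symm_apply_apply]
    exact Finset.mem_coe.2 (Finset.mem_Ioc.2 (by omega))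
  · rw [openNbhd_zero]
    exact fun u hu => hh.mem_Ioc_of_mem_openVerts hu

/-- From any two graphs one can reach locally isomorphic graphs in the same number of steps. -/
lemma exists_reach_localIso {m : ℕ} (b : ℕ) {n n' : ℕ} {g g' : SimpleGraph ℕ}
    (hg : IsTame m n g) (hg' : IsTame m n' g') :
    ∃ h h' φ A, Reach m ((b + 1) * (m + 1)) n g h ∧ Reach m ((b + 1) * (m + 1)) n' g' h' ∧
      LocalIso m b (n + (b + 1) * (m + 1)) h (n' + (b + 1) * (m + 1)) h' φ A := by
  induction b with
  | zero =>
    obtain ⟨h, hh⟩ := hg.exists_isFilling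
    obtain ⟨h', hh'⟩ := hg'.exists_isFilling
    obtain ⟨φ, A, hφ⟩ := hh.exists_localIso hh'
    exact ⟨h, h', φ, A, by simpa using hh.reach, by simpa using hh'.reach, by simpa using hφ⟩
  | succ b ih =>
    obtain ⟨h, h', φ, A, hr, hr', hφ⟩ := ih
    obtain ⟨f, hf⟩ := (hr.isTame hg).exists_isFilling
    obtain ⟨f', ψ, hrf', hψ⟩ := hφ.exists_reach (hr.isTame hg) (hr'.isTame hg') hf.reach
    have hup := hψ.upgrade ((hf.openNbhd_succ_subset
      (hf.reach.isTame (hr.isTame hg)).supp).trans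
        (Set.union_subset_union_right _ hφ.nbhd_subset))
    rw [Nat.add_assoc n, Nat.add_assoc n'] at hup
    rw [Nat.add_mul (b + 1) 1, one_mul]
    exact ⟨f, f', ψ, _, hr.trans hf.reach, hr'.trans hrf', hup⟩

/-! ### The averaging operator -/

/-- The expectation of `f` after one uniform attachment step. -/
def stepAvg (m : ℕ) (f : ℕ → SimpleGraph ℕ → ℝ) : ℕ → SimpleGraph ℕ → ℝ := fun n g =>
  (∑ S ∈ moves m n g, f (n + 1) (attachVertex n g S)) / (moves m n g).card

/-- `f` takes the same value on tame graphs with isomorphic `b`-neighborhoods of open vertices. -/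
def IsLocal (m b : ℕ) (f : ℕ → SimpleGraph ℕ → ℝ) : Prop :=
  ∀ n g n' g' φ A, IsTame m n g → IsTame m n' g' → LocalIso m b n g n' g' φ A → f n g = f n' g'

lemma IsLocal.stepAvg {m b : ℕ} {f : ℕ → SimpleGraph ℕ → ℝ} (hf : IsLocal m b f) :
    IsLocal m b (stepAvg m f) := by
  intro n g n' g' φ A hg hg' hi
  have hmoves : moves m n' g' = (moves m n g).map
      ⟨fun S => S.map φ.toEmbedding, Finset.map_injective _⟩ := by
    ext S'
    simp only [Finset.mem_map, Function.Embedding.coeFn_mk]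
    constructor
    · intro hS'
      have hS : (S'.map φ.symm.toEmbedding).map φ.toEmbedding = S' := by
        ext u
        simp
      exact ⟨S'.map φ.symm.toEmbedding, (hi.map_mem_moves _).1 (hS.symm ▸ hS'), hS⟩
    · rintro ⟨S, hS, rfl⟩
      exact (hi.map_mem_moves S).2 hS
  simp only [_root_.stepAvg]
  rw [hmoves, Finset.card_map, Finset.sum_map]
  congr 1
  refine Finset.sum_congr rfl fun S hS => ?_
  obtain ⟨ψ, hψ⟩ := hi.exists_attachVertex hg.supp hg'.supp hS
  exact hf _ _ _ _ ψ _ (hg.attachVertex hS)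
    (hg'.attachVertex ((hi.map_mem_moves S).2 hS)) hψ

lemma IsLocal.iterate_stepAvg {m b : ℕ} {f : ℕ → SimpleGraph ℕ → ℝ} (hf : IsLocal m b f) (k : ℕ) :
    IsLocal m b ((_root_.stepAvg m)^[k] f) := by
  induction k with
  | zero => exact hf
  | succ k ih => rw [Function.iterate_succ_apply']; exact ih.stepAvg

lemma IsTame.card_moves_pos {m n : ℕ} {g : SimpleGraph ℕ} (hg : IsTame m n g) :
    (0 : ℝ) < (moves m n g).card :=
  Nat.cast_pos.2 (Finset.card_pos.2 hg.moves_nonempty)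

lemma stepAvg_le {m n : ℕ} {g : SimpleGraph ℕ} {f : ℕ → SimpleGraph ℕ → ℝ} {c : ℝ}
    (hf : ∀ n g, IsTame m n g → f n g ≤ c) (hg : IsTame m n g) : stepAvg m f n g ≤ c := by
  rw [stepAvg, div_le_iff₀ hg.card_moves_pos, mul_comm, ← nsmul_eq_mul]
  exact Finset.sum_le_card_nsmul _ _ _ fun S hS => hf _ _ (hg.attachVertex hS)

lemma iterate_stepAvg_le {m n : ℕ} {g : SimpleGraph ℕ} {f : ℕ → SimpleGraph ℕ → ℝ} {c : ℝ}
    (hf : ∀ n g, IsTame m n g → f n g ≤ c) (k : ℕ) (hg : IsTame m n g) :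
    (stepAvg m)^[k] f n g ≤ c := by
  induction k generalizing n g with
  | zero => exact hf n g hg
  | succ k ih =>
    rw [Function.iterate_succ_apply']
    exact stepAvg_le (fun n g hg => ih hg) hg

lemma stepAvg_neg (m : ℕ) (f : ℕ → SimpleGraph ℕ → ℝ) :
    stepAvg m (fun n g => -f n g) = fun n g => -stepAvg m f n g := by
  funext n g
  simp only [stepAvg, Finset.sum_neg_distrib, neg_div]

lemma iterate_stepAvg_neg (m k : ℕ) (f : ℕ → SimpleGraph ℕ → ℝ) :
    (stepAvg m)^[k] (fun n g => -f n g) = fun n g => -(stepAvg m)^[k] f n g := by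
  induction k with
  | zero => rfl
  | succ k ih => rw [Function.iterate_succ_apply', ih, stepAvg_neg, Function.iterate_succ_apply']

/-- A lower bound for the probability of any single admissible step. -/
def minStepProb (m : ℕ) : ℝ := 1 / ((m * (m + 1)).choose m : ℝ)

lemma minStepProb_pos (m : ℕ) : 0 < minStepProb m :=
  one_div_pos.2 (Nat.cast_pos.2 (Nat.choose_pos (Nat.le_mul_of_pos_right m (Nat.succ_pos m))))

lemma minStepProb_le_one (m : ℕ) : minStepProb m ≤ 1 := by
  have h : 1 ≤ (m * (m + 1)).choose m :=
    Nat.choose_pos (Nat.le_mul_of_pos_right m (Nat.succ_pos m))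
  rw [minStepProb, div_le_one (by exact_mod_cast h)]
  exact_mod_cast h

lemma Reach.pow_mul_le_sub {m k n : ℕ} {g h : SimpleGraph ℕ} {f : ℕ → SimpleGraph ℕ → ℝ} {c : ℝ}
    (hf : ∀ n g, IsTame m n g → f n g ≤ c) (hg : IsTame m n g) (hr : Reach m k n g h) :
    minStepProb m ^ k * (c - f (n + k) h) ≤ c - (stepAvg m)^[k] f n g := by
  induction k generalizing n g with
  | zero => cases hr; simp
  | succ k ih =>
    obtain ⟨S, hS, hr⟩ := hr
    have hpos := hg.card_moves_pos
    have hle : ∀ T ∈ moves m n g,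
        0 ≤ c - (stepAvg m)^[k] f (n + 1) (attachVertex n g T) := fun T hT =>
      sub_nonneg.2 (iterate_stepAvg_le hf k (hg.attachVertex hT))
    have hsplit : c - (stepAvg m)^[k + 1] f n g =
        (∑ T ∈ moves m n g, (c - (stepAvg m)^[k] f (n + 1) (attachVertex n g T))) /
          (moves m n g).card := by
      rw [Function.iterate_succ_apply', stepAvg, Finset.sum_sub_distrib, Finset.sum_const,
        nsmul_eq_mul, sub_div, mul_div_cancel_left₀ _ hpos.ne']
    have hdelta : minStepProb m ≤ 1 / ((moves m n g).card : ℝ) :=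
      one_div_le_one_div_of_le hpos (Nat.cast_le.2 hg.card_moves_le)
    calc minStepProb m ^ (k + 1) * (c - f (n + (k + 1)) h)
        = minStepProb m * (minStepProb m ^ k * (c - f (n + 1 + k) h)) := by
          rw [pow_succ', mul_assoc, Nat.add_right_comm, Nat.add_assoc]
      _ ≤ minStepProb m * (c - (stepAvg m)^[k] f (n + 1) (attachVertex n g S)) :=
          mul_le_mul_of_nonneg_left (ih (hg.attachVertex hS) hr) (minStepProb_pos m).le
      _ ≤ 1 / ((moves m n g).card : ℝ) *
            (c - (stepAvg m)^[k] f (n + 1) (attachVertex n g S)) :=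
          mul_le_mul_of_nonneg_right hdelta (hle S hS)
      _ ≤ 1 / ((moves m n g).card : ℝ) *
            ∑ T ∈ moves m n g, (c - (stepAvg m)^[k] f (n + 1) (attachVertex n g T)) :=
          mul_le_mul_of_nonneg_left (Finset.single_le_sum hle hS) (by positivity)
      _ = c - (stepAvg m)^[k + 1] f n g := by rw [hsplit]; ring

/-- Averaging over the steps leading to locally isomorphic graphs contracts the oscillation. -/
lemma iterate_stepAvg_sub_le {m b : ℕ} {f : ℕ → SimpleGraph ℕ → ℝ} (hf : IsLocal m b f)
    {lo hi : ℝ} (hlo : ∀ n g, IsTame m n g → lo ≤ f n g)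
    (hhi : ∀ n g, IsTame m n g → f n g ≤ hi) {n n' : ℕ} {g g' : SimpleGraph ℕ}
    (hg : IsTame m n g) (hg' : IsTame m n' g') :
    (stepAvg m)^[(b + 1) * (m + 1)] f n g - (stepAvg m)^[(b + 1) * (m + 1)] f n' g' ≤
      (1 - minStepProb m ^ ((b + 1) * (m + 1))) * (hi - lo) := by
  obtain ⟨h, h', φ, A, hr, hr', hφ⟩ := exists_reach_localIso b hg hg'
  have h1 := hr.pow_mul_le_sub hhi hg
  have h2 := hr'.pow_mul_le_sub (f := fun n g => -f n g) (c := -lo)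
    (fun n g hg => neg_le_neg (hlo n g hg)) hg'
  rw [iterate_stepAvg_neg] at h2
  rw [hf _ _ _ _ φ A (hr.isTame hg) (hr'.isTame hg') hφ] at h1
  linarith

lemma abs_iterate_stepAvg_sub_le {m b : ℕ} {f : ℕ → SimpleGraph ℕ → ℝ} (hf : IsLocal m b f)
    (h0 : ∀ n g, 0 ≤ f n g) (h1 : ∀ n g, f n g ≤ 1) (j : ℕ) {n n' : ℕ} {g g' : SimpleGraph ℕ}
    (hg : IsTame m n g) (hg' : IsTame m n' g') :
    |(stepAvg m)^[j * ((b + 1) * (m + 1))] f n g - (stepAvg m)^[j * ((b + 1) * (m + 1))] f n' g'| ≤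
      (1 - minStepProb m ^ ((b + 1) * (m + 1))) ^ j := by
  suffices hmain : ∃ lo hi, hi - lo ≤ (1 - minStepProb m ^ ((b + 1) * (m + 1))) ^ j ∧
      ∀ n g, IsTame m n g → lo ≤ (stepAvg m)^[j * ((b + 1) * (m + 1))] f n g ∧
        (stepAvg m)^[j * ((b + 1) * (m + 1))] f n g ≤ hi by
    obtain ⟨lo, hi, hle, hb⟩ := hmain
    have := hb n g hg
    have := hb n' g' hg'
    rw [abs_le]
    constructor <;> linarith
  induction j with
  | zero => exact ⟨0, 1, by simp, fun n g _ => by simpa using ⟨h0 n g, h1 n g⟩⟩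
  | succ j ih =>
    obtain ⟨lo, hi, hle, hb⟩ := ih
    have hloc := hf.iterate_stepAvg (j * ((b + 1) * (m + 1)))
    set F := (stepAvg m)^[j * ((b + 1) * (m + 1))] f with hF
    have hosc := fun {n n' g g'} (hg : IsTame m n g) (hg' : IsTame m n' g') =>
      iterate_stepAvg_sub_le hloc (fun n g h => (hb n g h).1) (fun n g h => (hb n g h).2) hg hg'
    have hiter : (stepAvg m)^[(j + 1) * ((b + 1) * (m + 1))] f =
        (stepAvg m)^[(b + 1) * (m + 1)] F := by
      rw [hF, ← Function.iterate_add_apply]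
      congr 1
      ring_nf
    rw [hiter]
    set Q : Set ℝ := {x | ∃ n g, IsTame m n g ∧ x = (stepAvg m)^[(b + 1) * (m + 1)] F n g}
    have hne : Q.Nonempty := ⟨_, _, _, isTame_completeOn m, rfl⟩
    have hbdd : ∀ n g, IsTame m n g → (stepAvg m)^[(b + 1) * (m + 1)] F n g ≤ hi := fun n g hg =>
      iterate_stepAvg_le (fun n g h => (hb n g h).2) _ hg
    have hlow : ∀ n g, IsTame m n g → sSup Q - (1 - minStepProb m ^ ((b + 1) * (m + 1))) *
        (hi - lo) ≤ (stepAvg m)^[(b + 1) * (m + 1)] F n g := by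
      intro n g hg
      have : sSup Q ≤ (stepAvg m)^[(b + 1) * (m + 1)] F n g +
          (1 - minStepProb m ^ ((b + 1) * (m + 1))) * (hi - lo) := by
        refine csSup_le hne ?_
        rintro _ ⟨n', g', hg', rfl⟩
        have := hosc hg' hg
        linarith
      linarith
    refine ⟨_, sSup Q, ?_, fun n g hg => ⟨hlow n g hg, ?_⟩⟩
    · rw [sub_sub_cancel, pow_succ']
      refine mul_le_mul_of_nonneg_left hle (sub_nonneg.2 ?_)
      exact pow_le_one₀ (minStepProb_pos m).le (minStepProb_le_one m)
    · refine le_csSup ⟨hi, ?_⟩ ⟨n, g, hg, rfl⟩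
      rintro _ ⟨_, _, htame, rfl⟩
      exact hbdd _ _ htame

/-- The expectations of a local observable converge. -/
lemma exists_tendsto_iterate_stepAvg {m b : ℕ} {f : ℕ → SimpleGraph ℕ → ℝ} (hf : IsLocal m b f)
    (h0 : ∀ n g, 0 ≤ f n g) (h1 : ∀ n g, f n g ≤ 1) :
    ∃ L : ℝ, Tendsto (fun k => (stepAvg m)^[k] f (m + 1) (completeOn (m + 1))) atTop (𝓝 L) := by
  have hp := minStepProb_pos m
  have hK := isTame_completeOn m
  set r := 1 - minStepProb m ^ ((b + 1) * (m + 1))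
  have hr1 : r < 1 := sub_lt_self _ (pow_pos hp _)
  have hr0 : 0 ≤ r := sub_nonneg.2 (pow_le_one₀ hp.le (minStepProb_le_one m))
  refine cauchySeq_tendsto_of_complete (Metric.cauchySeq_iff'.2 fun ε hε => ?_)
  obtain ⟨j, hj⟩ := exists_pow_lt_of_lt_one hε hr1
  refine ⟨j * ((b + 1) * (m + 1)), fun k hk => ?_⟩
  obtain ⟨l, rfl⟩ := Nat.exists_eq_add_of_le' hk
  rw [Function.iterate_add_apply, Real.dist_eq]
  refine lt_of_le_of_lt ?_ hj
  set F := (stepAvg m)^[j * ((b + 1) * (m + 1))] f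
  have hosc : ∀ n g, IsTame m n g → |F n g - F (m + 1) (completeOn (m + 1))| ≤ r ^ j :=
    fun n g hg => abs_iterate_stepAvg_sub_le hf h0 h1 j hg hK
  rw [abs_sub_le_iff]
  constructor
  · have := iterate_stepAvg_le (f := F) (c := F (m + 1) (completeOn (m + 1)) + r ^ j)
      (fun n g hg => by linarith [(abs_le.1 (hosc n g hg)).2]) l hK
    linarith
  · have := iterate_stepAvg_le (f := fun n g => -F n g)
      (c := -F (m + 1) (completeOn (m + 1)) + r ^ j)
      (fun n g hg => by linarith [(abs_le.1 (hosc n g hg)).1]) l hK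
    rw [iterate_stepAvg_neg] at this
    linarith

/-! ### The law of the process -/

lemma finite_supportedOn (n : ℕ) : {g : SimpleGraph ℕ | SupportedOn g n}.Finite := by
  let e : SimpleGraph ℕ → Finset (ℕ × ℕ) := fun g =>
    (Finset.Icc 1 n ×ˢ Finset.Icc 1 n).filter fun p => g.Adj p.1 p.2
  refine Set.Finite.of_injOn (f := e)
    (t := ↑(Finset.Icc 1 n ×ˢ Finset.Icc 1 n).powerset) ?_ ?_ (Finset.finite_toSet _)
  · intro g _
    exact Finset.mem_coe.2 (Finset.mem_powerset.2 (Finset.filter_subset _ _))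
  · have hmem : ∀ g, SupportedOn g n → ∀ u v, (u, v) ∈ e g ↔ g.Adj u v := by
      intro g hg u v
      simp only [e, Finset.mem_filter, Finset.mem_product, and_iff_right_iff_imp]
      exact hg u v
    intro g hg g' hg' h
    ext u v
    rw [← hmem g hg, ← hmem g' hg', h]

/-- The finset of tame graphs on `{1, …, n}`. -/
def tameFinset (m n : ℕ) : Finset (SimpleGraph ℕ) :=
  ((finite_supportedOn n).subset fun _ (hg : IsTame m n _) => hg.supp).toFinset

lemma mem_tameFinset {m n : ℕ} {g : SimpleGraph ℕ} : g ∈ tameFinset m n ↔ IsTame m n g :=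
  Set.Finite.mem_toFinset _

lemma IsUAStep.nbrsIn_mem_moves {m n : ℕ} {g g' : SimpleGraph ℕ} (h : IsUAStep m n g g') :
    nbrsIn g' (n + 1) (n + 1) ∈ moves m n g :=
  mem_moves.2 ⟨fun _ hu => mem_openFinset.2 (h.2.2.2 _ (Finset.mem_filter.1 hu).2), h.2.2.1⟩

lemma IsUAStep.eq_attachVertex {m n : ℕ} {g g' : SimpleGraph ℕ} (h : IsUAStep m n g g')
    (hg : SupportedOn g n) : g' = attachVertex n g (nbrsIn g' (n + 1) (n + 1)) := by
  have hS := subset_Icc_of_mem_moves h.nbrsIn_mem_moves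
  have hnew : ∀ v, g'.Adj (n + 1) v ↔
      (attachVertex n g (nbrsIn g' (n + 1) (n + 1))).Adj (n + 1) v := by
    intro v
    rw [attachVertex_adj_new hg hS, nbrsIn, Finset.mem_filter, iff_and_self]
    exact fun hv => (h.1 _ _ hv).2
  ext u v
  by_cases hu : u = n + 1
  · rw [hu, hnew]
  by_cases hv : v = n + 1
  · rw [hv, SimpleGraph.adj_comm, hnew, SimpleGraph.adj_comm]
  · rw [h.2.1 u v hu hv, attachVertex_adj_of_ne hu hv]

namespace UAProcess

variable {m : ℕ} {Ω : Type} [MeasurableSpace Ω] {P : Measure Ω} [IsProbabilityMeasure P]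

lemma ae_isUAStep (X : UAProcess m P) {n : ℕ} (hn : m + 1 ≤ n)
    (ht : ∀ᵐ ω ∂P, IsTame m n (X.G n ω)) :
    ∀ᵐ ω ∂P, IsUAStep m n (X.G n ω) (X.G (n + 1) ω) := by
  let pairs : Set (SimpleGraph ℕ × SimpleGraph ℕ) :=
    {p | IsTame m n p.1 ∧ IsUAStep m n p.1 p.2}
  have hfin : pairs.Finite :=
    ((finite_supportedOn n).prod (finite_supportedOn (n + 1))).subset
      fun p hp => ⟨hp.1.supp, hp.2.1⟩
  have hmeas : MeasurableSet
      {ω | IsTame m n (X.G n ω) ∧ IsUAStep m n (X.G n ω) (X.G (n + 1) ω)} := by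
    have : {ω | IsTame m n (X.G n ω) ∧ IsUAStep m n (X.G n ω) (X.G (n + 1) ω)} =
        ⋃ p ∈ pairs, {ω | X.G n ω = p.1} ∩ {ω | X.G (n + 1) ω = p.2} := by
      ext ω
      simp only [Set.mem_iUnion, Set.mem_inter_iff, Set.mem_ofPred_eq, exists_prop, pairs]
      constructor
      · exact fun h => ⟨(X.G n ω, X.G (n + 1) ω), h, rfl, rfl⟩
      · rintro ⟨p, hp, h1, h2⟩
        rwa [h1, h2]
    rw [this]
    exact hfin.measurableSet_biUnion fun p _ => (X.meas n p.1).inter (X.meas (n + 1) p.2)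
  have hone : P {ω | IsTame m n (X.G n ω) ∧ IsUAStep m n (X.G n ω) (X.G (n + 1) ω)} = 1 := by
    rw [← X.stepAdm n hn]
    refine measure_congr (Filter.eventuallyEq_set.2 ?_)
    filter_upwards [ht] with ω hω
    exact and_iff_right hω
  filter_upwards [(mem_ae_iff_prob_eq_one hmeas).2 hone] with ω hω
  exact hω.2

lemma ae_eq_completeOn (X : UAProcess m P) : ∀ᵐ ω ∂P, X.G (m + 1) ω = completeOn (m + 1) :=
  (mem_ae_iff_prob_eq_one (X.meas _ _)).2 X.init

lemma ae_isTame (X : UAProcess m P) {n : ℕ} (hn : m + 1 ≤ n) :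
    ∀ᵐ ω ∂P, IsTame m n (X.G n ω) := by
  induction n, hn using Nat.le_induction with
  | base =>
    filter_upwards [X.ae_eq_completeOn] with ω hω
    exact hω ▸ isTame_completeOn m
  | succ n hn ih =>
    filter_upwards [ih, X.ae_isUAStep hn ih] with ω hω hs
    rw [hs.eq_attachVertex hω.supp]
    exact hω.attachVertex hs.nbrsIn_mem_moves

lemma measureReal_attachVertex (X : UAProcess m P) {n : ℕ} (hn : m + 1 ≤ n) {g : SimpleGraph ℕ}
    (hg : IsTame m n g) {S : Finset ℕ} (hS : S ∈ moves m n g) :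
    P.real {ω | X.G (n + 1) ω = attachVertex n g S} =
      P.real {ω | X.G n ω = g} / (moves m n g).card := by
  have hSn := subset_Icc_of_mem_moves hS
  have ht := X.ae_isTame hn
  have hcongr : P {ω | X.G (n + 1) ω = attachVertex n g S} =
      P {ω | X.G n ω = g ∧ nbrsIn (X.G (n + 1) ω) (n + 1) (n + 1) = S} := by
    refine measure_congr (Filter.eventuallyEq_set.2 ?_)
    filter_upwards [ht, X.ae_isUAStep hn ht] with ω hω hs
    have heq := hs.eq_attachVertex hω.supp
    constructor
    · intro (h : X.G (n + 1) ω = attachVertex n g S)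
      exact attachVertex_inj hω.supp hg.supp (subset_Icc_of_mem_moves hs.nbrsIn_mem_moves) hSn
        (heq.symm.trans h)
    · rintro ⟨h1, h2⟩
      exact heq.trans (by rw [h1, h2])
  have hcard : numOpenSets m n g = (moves m n g).card := (Finset.card_powersetCard _ _).symm
  rw [measureReal_def, measureReal_def, hcongr, X.stepUnif n hn g hg.supp S (mem_moves.1 hS).2
    (fun v hv => mem_openVerts.1 (mem_openFinset.1 ((mem_moves.1 hS).1 hv))), hcard,
    ENNReal.toReal_div, ENNReal.toReal_natCast]

/-- The expectation of `f n (X.G n)`. -/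
def expect (X : UAProcess m P) (n : ℕ) (f : ℕ → SimpleGraph ℕ → ℝ) : ℝ :=
  ∑ g ∈ tameFinset m n, P.real {ω | X.G n ω = g} * f n g

lemma attachVertex_injOn (m n : ℕ) :
    Set.InjOn (fun p : (_ : SimpleGraph ℕ) × Finset ℕ => attachVertex n p.1 p.2)
      ((tameFinset m n).sigma fun g => moves m n g) := by
  rintro ⟨g, S⟩ h ⟨g', S'⟩ h' heq
  rw [Finset.mem_coe, Finset.mem_sigma, mem_tameFinset] at h h'
  obtain ⟨hg, hS⟩ := h
  obtain ⟨hg', hS'⟩ := h'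
  obtain ⟨rfl, rfl⟩ := attachVertex_inj hg.supp hg'.supp (subset_Icc_of_mem_moves hS)
    (subset_Icc_of_mem_moves hS') heq
  rfl

lemma expect_succ (X : UAProcess m P) {n : ℕ} (hn : m + 1 ≤ n) (f : ℕ → SimpleGraph ℕ → ℝ) :
    X.expect (n + 1) f = X.expect n (stepAvg m f) := by
  have hright : X.expect n (stepAvg m f) =
      ∑ p ∈ (tameFinset m n).sigma fun g => moves m n g,
        P.real {ω | X.G n ω = p.1} / (moves m n p.1).card *
          f (n + 1) (attachVertex n p.1 p.2) := by
    rw [Finset.sum_sigma]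
    refine Finset.sum_congr rfl fun g _ => ?_
    rw [stepAvg, Finset.sum_div, Finset.mul_sum]
    exact Finset.sum_congr rfl fun S _ => by ring
  rw [hright]
  symm
  refine Finset.sum_of_injOn _ (attachVertex_injOn m n) ?_ ?_ ?_
  · rintro ⟨g, S⟩ h
    rw [Finset.mem_coe, Finset.mem_sigma, mem_tameFinset] at h
    exact Finset.mem_coe.2 (mem_tameFinset.2 (h.1.attachVertex h.2))
  · intro h _ hnot
    have hzero : P {ω | X.G (n + 1) ω = h} = 0 := by
      rw [measure_eq_zero_iff_ae_notMem]
      have ht := X.ae_isTame hn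
      filter_upwards [ht, X.ae_isUAStep hn ht] with ω hω hs hωh
      refine hnot ⟨⟨X.G n ω, nbrsIn (X.G (n + 1) ω) (n + 1) (n + 1)⟩, ?_, ?_⟩
      · exact Finset.mem_coe.2 (Finset.mem_sigma.2
          ⟨mem_tameFinset.2 hω, hs.nbrsIn_mem_moves⟩)
      · exact (hs.eq_attachVertex hω.supp).symm.trans hωh
    rw [measureReal_def, hzero, ENNReal.toReal_zero, zero_mul]
  · rintro ⟨g, S⟩ h
    rw [Finset.mem_sigma, mem_tameFinset] at h
    rw [X.measureReal_attachVertex hn h.1 h.2]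

lemma expect_add (X : UAProcess m P) (k : ℕ) (f : ℕ → SimpleGraph ℕ → ℝ) :
    X.expect (m + 1 + k) f = (stepAvg m)^[k] f (m + 1) (completeOn (m + 1)) := by
  induction k generalizing f with
  | zero =>
    have hK : P.real {ω | X.G (m + 1) ω = completeOn (m + 1)} = 1 := by
      rw [measureReal_def, X.init, ENNReal.toReal_one]
    rw [expect, Finset.sum_eq_single (completeOn (m + 1))]
    · simp only [Nat.add_zero, hK, one_mul, Function.iterate_zero, id_eq]
    · intro g _ hg
      have hzero : P {ω | X.G (m + 1) ω = g} = 0 := by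
        rw [measure_eq_zero_iff_ae_notMem]
        filter_upwards [X.ae_eq_completeOn] with ω hω hωg
        exact hg (hωg.symm.trans hω)
      rw [Nat.add_zero, measureReal_def, hzero, ENNReal.toReal_zero, zero_mul]
    · exact fun h => absurd (mem_tameFinset.2 (isTame_completeOn m)) h
  | succ k ih =>
    rw [← Nat.add_assoc, X.expect_succ (by omega), ih, Function.iterate_succ_apply]

lemma measure_eq_expect (X : UAProcess m P) {n : ℕ} (hn : m + 1 ≤ n)
    (E : ℕ → SimpleGraph ℕ → Prop) :
    P {ω | E n (X.G n ω)} = ENNReal.ofReal (X.expect n fun n g => if E n g then 1 else 0) := by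
  have hcongr : P {ω | E n (X.G n ω)} =
      P (⋃ g ∈ (tameFinset m n).filter (E n), {ω | X.G n ω = g}) := by
    refine measure_congr (Filter.eventuallyEq_set.2 ?_)
    filter_upwards [X.ae_isTame hn] with ω hω
    simp [mem_tameFinset, hω]
  have hdisj : Set.PairwiseDisjoint (↑((tameFinset m n).filter (E n)))
      fun g => {ω | X.G n ω = g} := by
    intro g _ g' _ hne
    refine Set.disjoint_left.2 fun ω (h : X.G n ω = g) (h' : X.G n ω = g') => ?_
    exact hne (h.symm.trans h')
  rw [hcongr, measure_biUnion_finset hdisj fun g _ => X.meas n g, expect,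
    ENNReal.ofReal_sum_of_nonneg fun g _ => by positivity, Finset.sum_filter]
  refine Finset.sum_congr rfl fun g _ => ?_
  split_ifs <;> simp

end UAProcess

/-- For every integer `m > 1`, every radius `a ≥ 1`, every finite graph `H`,
and every subset `S` of the vertices of `H`: in the random uniform attachment graph process
with degree cap `d = 2m`, the probability that there is a graph isomorphism from the
subgraph of `G n` induced on the `a`-neighborhood of the open vertices of `G n` onto `H`
mapping the set of open vertices of `G n` onto `S` converges as `n → ∞`. -/
theorem uniform_attachment_open_neighborhood_type_converges
    (m : ℕ) (hm : 1 < m) (a : ℕ) (ha : 1 ≤ a)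
    {V : Type} [Fintype V] (H : SimpleGraph V) (S : Set V)
    {Ω : Type} [MeasurableSpace Ω] (P : Measure Ω) [IsProbabilityMeasure P]
    (X : UAProcess m P) :
    ∃ L : ℝ≥0∞,
      Tendsto (fun n => P {ω |
          ∃ φ : (X.G n ω).induce (openNbhd m n a (X.G n ω)) ≃g H,
            ∀ x : openNbhd m n a (X.G n ω),
              (φ x ∈ S ↔ (x : ℕ) ∈ openVerts m n (X.G n ω))})
        atTop (𝓝 L) := by
  let E : ℕ → SimpleGraph ℕ → Prop := fun n g =>
    ∃ φ : g.induce (openNbhd m n a g) ≃g H,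
      ∀ x : openNbhd m n a g, (φ x ∈ S ↔ (x : ℕ) ∈ openVerts m n g)
  have hE : IsLocal m a fun n g => if E n g then (1 : ℝ) else 0 := by
    intro n g n' g' φ A _ hg' hi
    let e := hi.nbhdIso hg'.supp
    have he : ∀ x : openNbhd m n a g, ((e x : ℕ) ∈ openVerts m n' g' ↔
        (x : ℕ) ∈ openVerts m n g) := fun x => hi.open_iff x
    have hiff : E n g ↔ E n' g' := by
      constructor
      · rintro ⟨ψ, hψ⟩
        refine ⟨e.symm.trans ψ, fun x => ?_⟩
        obtain ⟨y, rfl⟩ := e.surjective x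
        rw [he, ← hψ, RelIso.trans_apply, RelIso.symm_apply_apply]
      · rintro ⟨ψ, hψ⟩
        exact ⟨e.trans ψ, fun x => (hψ (e x)).trans (he x)⟩
    simp only [hiff]
  obtain ⟨L, hL⟩ := exists_tendsto_iterate_stepAvg hE
    (fun n g => by split_ifs <;> simp) (fun n g => by split_ifs <;> simp)
  refine ⟨ENNReal.ofReal L, (tendsto_add_atTop_iff_nat (m + 1)).1 ?_⟩
  refine (ENNReal.tendsto_ofReal hL).congr fun k => ?_
  rw [← X.expect_add, ← X.measure_eq_expect (by omega) E, Nat.add_comm k]
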